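/- A morphism f : X → Y of undirected graphs is a covering (i.e., for every node x of X, f₁ restricts to a bijection from {u ∈ X₁ : s(u) = x} onto {v ∈ Y₁ : s(v) = f₀(x)}) if and only if f has the right lifting property with respect to both the elementary folding V_U → A_U and the node inclusion D_U → A_U. -/

import Mathlib

open CategoryTheory

namespace Paper

/-- An undirected graph: a set of nodes, a set of half-arcs, source and target maps
and an involution `i` on half-arcs with `s ∘ i = t`. -/
structure UGraph : Type 1 where
  nodes : Type
  half : Type
  s : half → nodes
  t : half → nodes
  inv : half → half
  inv_inv : ∀ a, inv (inv a) = a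
  s_inv : ∀ a, s (inv a) = t a

/-- A morphism of undirected graphs: maps on nodes and half-arcs commuting with
source, target and the involution. -/
@[ext]
structure UGraph.Hom (X Y : UGraph) where
  f0 : X.nodes → Y.nodes
  f1 : X.half → Y.half
  comm_s : ∀ a, Y.s (f1 a) = f0 (X.s a)
  comm_t : ∀ a, Y.t (f1 a) = f0 (X.t a)
  comm_inv : ∀ a, Y.inv (f1 a) = f1 (X.inv a)

/-- The category of undirected graphs. -/
instance : Category UGraph where
  Hom := UGraph.Hom
  id X := ⟨id, id, fun _ => rfl, fun _ => rfl, fun _ => rfl⟩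
  comp f g := ⟨g.f0 ∘ f.f0, g.f1 ∘ f.f1,
    fun a => by simp [Function.comp, g.comm_s, f.comm_s],
    fun a => by simp [Function.comp, g.comm_t, f.comm_t],
    fun a => by simp [Function.comp, g.comm_inv, f.comm_inv]⟩

@[simp] theorem UGraph.comp_f0 {X Y Z : UGraph} (f : X ⟶ Y) (g : Y ⟶ Z) :
    (f ≫ g).f0 = g.f0 ∘ f.f0 := rfl

@[simp] theorem UGraph.comp_f1 {X Y Z : UGraph} (f : X ⟶ Y) (g : Y ⟶ Z) :
    (f ≫ g).f1 = g.f1 ∘ f.f1 := rfl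

/-- two nodes are adjacent if some half-arc goes from one to the other. -/
def UGraph.adj (X : UGraph) (x y : X.nodes) : Prop :=
  ∃ u : X.half, X.s u = x ∧ X.t u = y

/-- An undirected graph is connected if any two nodes are joined by a finite
sequence of consecutively incident half-arcs. -/
def UGraph.Connected (X : UGraph) : Prop :=
  ∀ x y : X.nodes, Relation.ReflTransGen X.adj x y

/-- The undirected `p`-cycle `c^p_U` : nodes `ℤ/pℤ`, half-arcs `[n]⁺ = (n, true)`
and `[n]⁻ = (n, false)` with `s [n]⁺ = [n]`, `t [n]⁺ = [n+1]`, `i [n]⁺ = [n]⁻`. -/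
def cycleU (p : ℕ) : UGraph where
  nodes := ZMod p
  half := ZMod p × Bool
  s a := if a.2 then a.1 else a.1 + 1
  t a := if a.2 then a.1 + 1 else a.1
  inv a := (a.1, !a.2)
  inv_inv a := by simp
  s_inv a := by rcases a with ⟨n, _ | _⟩ <;> simp

/-- A `p`-cycle `h : c^p_U ⟶ X` is backtrack-free if `h₁([n+1]⁺) ≠ h₁([n]⁻)` for
all `n`. -/
def BFree {p : ℕ} {X : UGraph} (h : cycleU p ⟶ X) : Prop :=
  ∀ n : ZMod p, h.f1 (n + 1, true) ≠ h.f1 (n, false)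

/-- A morphism of undirected graphs is a covering if it restricts to a bijection on
the half-arcs issued from each node. -/
def IsCovering {X Y : UGraph} (f : X ⟶ Y) : Prop :=
  ∀ x : X.nodes,
    Function.Bijective (fun u : {u : X.half // X.s u = x} =>
      (⟨f.f1 u.1, by rw [f.comm_s, u.2]⟩ : {v : Y.half // Y.s v = f.f0 x}))

end Paper

namespace Paper

/-- The dot graph `D_U` : one node, no half-arcs. -/
def DU : UGraph where
  nodes := Unit
  half := Empty
  s a := a.elim
  t a := a.elim
  inv a := a.elim
  inv_inv a := a.elim
  s_inv a := a.elim

/-- The arc graph `A_U` : nodes `u₁ = false`, `u₂ = true`, half-arcs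
`a₁ = false`, `a₂ = true` with `s a₁ = u₁`, `t a₁ = u₂`, `i a₁ = a₂`. -/
def AU : UGraph where
  nodes := Bool
  half := Bool
  s a := a
  t a := !a
  inv a := !a
  inv_inv a := by simp
  s_inv a := rfl

/-- The graph `V_U` : nodes `v₁ = 0`, `v₂ = 1`, `v₃ = 2`, half-arcs
`b₁ = (0, true)`, `b₂ = (0, false)`, `c₁ = (1, true)`, `c₂ = (1, false)` with
`s b₁ = s c₁ = v₁`, `t b₁ = v₂`, `t c₁ = v₃`, `i b₁ = b₂`, `i c₁ = c₂`. -/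
def VU : UGraph where
  nodes := Fin 3
  half := Fin 2 × Bool
  s a := if a.2 then 0 else a.1.succ
  t a := if a.2 then a.1.succ else 0
  inv a := (a.1, !a.2)
  inv_inv a := by simp
  s_inv a := by rcases a with ⟨j, _ | _⟩ <;> simp

/-- The node component of the elementary folding. -/
def foldNode : Fin 3 → Bool := fun x => decide (x ≠ 0)

/-- The elementary folding `V_U ⟶ A_U` : `v₁ ↦ u₁`, `v₂, v₃ ↦ u₂`,
`b₁, c₁ ↦ a₁`, `b₂, c₂ ↦ a₂`. -/
def folding : VU ⟶ AU where
  f0 := foldNode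
  f1 a := !a.2
  comm_s a := by
    rcases a with ⟨j, _ | _⟩ <;>
      simp [AU, VU, foldNode, Fin.succ_ne_zero]
  comm_t a := by
    rcases a with ⟨j, _ | _⟩ <;>
      simp [AU, VU, foldNode, Fin.succ_ne_zero]
  comm_inv a := by rcases a with ⟨j, _ | _⟩ <;> simp [AU, VU, foldNode]

/-- The node inclusion `D_U ⟶ A_U` sending the node of `D_U` to `u₁`. -/
def nodeIncl : DU ⟶ AU where
  f0 _ := false
  f1 a := a.elim
  comm_s a := a.elim
  comm_t a := a.elim
  comm_inv a := a.elim

theorem UGraph.t_inv (X : UGraph) (a : X.half) : X.t (X.inv a) = X.s a := by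
  rw [← X.s_inv, X.inv_inv]

theorem AU_ext {X : UGraph} (g h : AU ⟶ X) (e : g.f1 false = h.f1 false) : g = h := by
  have e1 : ∀ a : Bool, g.f1 a = h.f1 a := by
    intro a
    cases a with
    | false => exact e
    | true =>
      have p := g.comm_inv false
      have q := h.comm_inv false
      rw [e] at p
      exact p.symm.trans q
  apply UGraph.Hom.ext
  · funext x
    have p := g.comm_s x
    have q := h.comm_s x
    rw [e1 x] at p
    exact p.symm.trans q
  · funext a
    exact e1 a

theorem VU_ext {X : UGraph} (g h : VU ⟶ X)
    (e : ∀ j : Fin 2, g.f1 (j, true) = h.f1 (j, true)) : g = h := by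
  have e1 : ∀ a : Fin 2 × Bool, g.f1 a = h.f1 a := by
    rintro ⟨j, _ | _⟩
    · have p := g.comm_inv (j, true)
      have q := h.comm_inv (j, true)
      rw [e] at p
      exact p.symm.trans q
    · exact e j
  have e0 : ∀ a : Fin 2 × Bool, g.f0 (VU.s a) = h.f0 (VU.s a) := by
    intro a
    exact (g.comm_s a).symm.trans ((congrArg X.s (e1 a)).trans (h.comm_s a))
  apply UGraph.Hom.ext
  · funext x
    change Fin 3 at x
    refine Fin.cases ?_ (fun j => ?_) x
    · exact e0 (0, true)
    · exact e0 (j, false)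
  · funext a
    exact e1 a

/-- The morphism from the arc graph picking out a half-arc. -/
def arcHom {X : UGraph} (u : X.half) : AU ⟶ X where
  f0 x := X.s (bif x then X.inv u else u)
  f1 x := bif x then X.inv u else u
  comm_s _ := rfl
  comm_t a := by
    cases a
    · exact (X.s_inv u).symm
    · exact X.t_inv u
  comm_inv a := by
    cases a
    · rfl
    · exact X.inv_inv u

/-- The morphism from `VU` picking out two half-arcs with the same source. -/
def vHom {X : UGraph} (w : Fin 2 → X.half) (h : ∀ j, X.s (w j) = X.s (w 0)) : VU ⟶ X where
  f0 x := Fin.cases (motive := fun _ => X.nodes) (X.s (w 0)) (fun j => X.t (w j)) x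
  f1 a := bif a.2 then w a.1 else X.inv (w a.1)
  comm_s a := by
    rcases a with ⟨j, _ | _⟩
    · exact X.s_inv _
    · exact h j
  comm_t a := by
    rcases a with ⟨j, _ | _⟩
    · exact (X.t_inv _).trans (h j)
    · rfl
  comm_inv a := by
    rcases a with ⟨j, _ | _⟩
    · exact X.inv_inv _
    · rfl

/-- The morphism from the dot graph picking out a node. -/
def dotHom {X : UGraph} (x : X.nodes) : DU ⟶ X where
  f0 _ := x
  f1 a := a.elim
  comm_s a := a.elim
  comm_t a := a.elim
  comm_inv a := a.elim

theorem DU_ext {X : UGraph} (g h : DU ⟶ X) (e : g.f0 () = h.f0 ()) : g = h := by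
  apply UGraph.Hom.ext
  · funext x
    exact e
  · funext a
    exact a.elim

/-- a morphism of undirected graphs is a covering if and only if it
has the right lifting property with respect to the elementary folding `V_U ⟶ A_U`
and to the node inclusion `D_U ⟶ A_U`. -/
theorem stmt_9 {X Y : UGraph} (f : X ⟶ Y) :
    IsCovering f ↔
      (HasLiftingProperty folding f ∧ HasLiftingProperty nodeIncl f) := by
  constructor
  · intro hc
    refine ⟨⟨fun {top bot} sq => ?_⟩, ⟨fun {top bot} sq => ?_⟩⟩
    · have hw : ∀ a, f.f1 (top.f1 a) = bot.f1 (folding.f1 a) := fun a =>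
        congrFun (congrArg UGraph.Hom.f1 sq.w) a
      have key : top.f1 (1, true) = top.f1 (0, true) :=
        congrArg Subtype.val (@(hc (top.f0 (0 : Fin 3))).1
          ⟨top.f1 (1, true), top.comm_s (1, true)⟩ ⟨top.f1 (0, true), top.comm_s (0, true)⟩
          (Subtype.ext ((hw (1, true)).trans (hw (0, true)).symm)))
      refine ⟨⟨⟨arcHom (top.f1 (0, true)), ?_, ?_⟩⟩⟩
      · apply VU_ext
        intro j
        fin_cases j
        · rfl
        · exact key.symm
      · apply AU_ext
        exact hw (0, true)
    · have hw : f.f0 (top.f0 ()) = bot.f0 false :=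
        congrFun (congrArg UGraph.Hom.f0 sq.w) ()
      obtain ⟨⟨u, hu⟩, hu'⟩ := (hc (top.f0 ())).2
        ⟨bot.f1 false, (bot.comm_s false).trans hw.symm⟩
      refine ⟨⟨⟨arcHom u, ?_, ?_⟩⟩⟩
      · apply DU_ext
        exact hu
      · apply AU_ext
        exact congrArg Subtype.val hu'
  · rintro ⟨h1, h2⟩ x
    constructor
    · rintro ⟨u, hu⟩ ⟨v, hv⟩ huv
      have huv' : f.f1 u = f.f1 v := congrArg Subtype.val huv
      have hs : ∀ j : Fin 2, X.s (![u, v] j) = X.s (![u, v] 0) := by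
        intro j
        fin_cases j
        · rfl
        · exact hv.trans hu.symm
      have sq : CommSq (vHom ![u, v] hs) folding f (arcHom (f.f1 u)) := by
        constructor
        apply VU_ext
        intro j
        fin_cases j
        · rfl
        · exact huv'.symm
      have hl := (h1.sq_hasLift sq).exists_lift
      obtain ⟨⟨l, hl, _⟩⟩ := hl
      have hl' : ∀ a, l.f1 (folding.f1 a) = (vHom ![u, v] hs).f1 a := fun a =>
        congrFun (congrArg UGraph.Hom.f1 hl) a
      exact Subtype.ext ((hl' (0, true)).symm.trans (hl' (1, true)))
    · rintro ⟨v, hv⟩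
      have sq : CommSq (dotHom x) nodeIncl f (arcHom v) := by
        constructor
        apply DU_ext
        exact hv.symm
      obtain ⟨⟨l, hl, hr⟩⟩ := (h2.sq_hasLift sq).exists_lift
      have hl' : l.f0 false = x := congrFun (congrArg UGraph.Hom.f0 hl) ()
      have hr' : f.f1 (l.f1 false) = v := congrFun (congrArg UGraph.Hom.f1 hr) false
      exact ⟨⟨l.f1 false, (l.comm_s false).trans hl'⟩, Subtype.ext hr'⟩

end Paper
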